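/- arXiv:1804.01898 — 2 statements merged into one kernel-verified Lean document; each statement's English description precedes it below -/
import Mathlib

section
/- Fix an integer s ≥ 2. Define r : ℤ → ℚ by r(n) = 1/n! for n ≥ 0 and r(n) = 0 for n < 0. Let (i₁,…,i_{2s+1}) be given by i₁ = 2, i_j = 1 for 2 ≤ j ≤ 2s−1, and i_{2s} = i_{2s+1} = 0. Then the determinant of the (2s+1)×(2s+1) matrix with (j,ℓ)-entry r(s − 1 + i_j − j + ℓ) equals (s(2s+1)(s+1)²(2s−1)/(3s+1))·∏_{k=0}^{2s} k!/(s+k)!. -/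
/-- `r(n) = 1/n!` for `n ≥ 0` and `r(n) = 0` for `n < 0`. -/
def rfact (n : ℤ) : ℚ := if 0 ≤ n then 1 / (Nat.factorial n.toNat : ℚ) else 0

/-!
Since `r(a - k) = r(a) · a (a - 1) ⋯ (a - k + 1)` and the falling factorials are monic, a
determinant with entries `r(v i - k)` is `∏ r(v i)` times the Vandermonde determinant of `v`. For
the `n × n` matrix of the theorem, read backwards, `v` is the translate by `s` of
`-1, 0, 2, 3, …, n - 2, n`. Comparing with `0, 1, …, n - 1`, whose translate by `s` gives
`∏ k! / (s + k)!`, the Vandermonde determinant changes by the factor `n (n + 1) (n - 2) / 2` and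
the product of the `r(v i)` by the factor `s (s + 1) / (s + n)`.
-/

open Finset Matrix Polynomial
open scoped Nat

lemma rfact_natCast (n : ℕ) : rfact n = (n ! : ℚ)⁻¹ := by
  simp [rfact]

lemma rfact_sub_one (a : ℤ) : rfact (a - 1) = a * rfact a := by
  rcases lt_trichotomy a 0 with ha | rfl | ha
  · simp [rfact, ha.not_ge, show ¬ 1 ≤ a by lia]
  · simp [rfact]
  · obtain ⟨n, rfl⟩ : ∃ n : ℕ, a = (n + 1 : ℕ) := ⟨(a - 1).toNat, by lia⟩
    rw [show ((n + 1 : ℕ) : ℤ) - 1 = n by simp, rfact_natCast, rfact_natCast, Nat.factorial_succ]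
    push_cast
    field_simp

lemma rfact_sub_natCast (a : ℤ) (k : ℕ) :
    rfact (a - k) = rfact a * (descPochhammer ℚ k).eval (a : ℚ) := by
  induction k with
  | zero => simp
  | succ k ih =>
    rw [show a - (k + 1 : ℕ) = a - k - 1 by push_cast; ring, rfact_sub_one, ih,
      descPochhammer_succ_eval]
    push_cast
    ring

lemma det_rfact_sub {n : ℕ} (v : Fin n → ℤ) :
    (of fun i k : Fin n => rfact (v i - (k : ℕ))).det =
      (∏ i, rfact (v i)) * (vandermonde fun i => (v i : ℚ)).det := by
  simp_rw [rfact_sub_natCast]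
  rw [det_eval_matrixOfPolynomials_eq_det_vandermonde _ (fun k : Fin n => descPochhammer ℚ k)
    (fun k => descPochhammer_natDegree ℚ k) (fun k => monic_descPochhammer ℚ k)]
  exact det_mul_column (fun i => rfact (v i)) _

lemma det_vandermonde_eq_prod_range {R : Type*} [CommRing R] (n : ℕ) (v : ℕ → R) :
    (vandermonde fun i : Fin n => v i).det = ∏ j ∈ range n, ∏ i ∈ range j, (v j - v i) := by
  rw [det_vandermonde, prod_comm' (t' := univ) (s' := fun j => Iio j) (by simp),
    ← Fin.prod_univ_eq_prod_range fun j => ∏ i ∈ range j, (v j - v i)]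
  refine prod_congr rfl fun j _ => ?_
  rw [← Nat.Iio_eq_range, ← Fin.map_valEmbedding_Iio, prod_map]
  rfl

lemma prod_range_add_three {M : Type*} [CommMonoid M] (f : ℕ → M) (m : ℕ) :
    ∏ i ∈ range (m + 3), f i = f 0 * f 1 * (∏ i ∈ range m, f (i + 2)) * f (m + 2) := by
  rw [prod_range_succ, prod_range_succ', prod_range_succ']
  ac_rfl

lemma prod_range_add_three_div_add_one (m : ℕ) :
    ∏ j ∈ range m, ((j + 3 : ℚ) / (j + 1)) = (m + 1) * (m + 2) / 2 := by
  induction m with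
  | zero => simp
  | succ m ih =>
    rw [prod_range_succ, ih]
    push_cast
    field_simp
    ring

/-- The sequence `-1, 0, 2, 3, …, n - 2, n` (for `n ≥ 3` and `i < n`): in increasing order, the
entries of `λ + ρ` for the weight `λ = (1, 0, …, 0, -1, -1)` of `GL n` and
`ρ = (n - 1, …, 1, 0)`. -/
def shiftedWeight (n i : ℕ) : ℤ := if i < 2 then i - 1 else if i + 1 < n then i else i + 1

section ShiftedWeight

variable {n j m : ℕ}

lemma shiftedWeight_zero : shiftedWeight n 0 = -1 := rfl

lemma shiftedWeight_one : shiftedWeight n 1 = 0 := rfl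

lemma shiftedWeight_add_two (hj : j + 3 < n) : shiftedWeight n (j + 2) = j + 2 := by
  simp [shiftedWeight, hj]

lemma shiftedWeight_last : shiftedWeight (m + 3) (m + 2) = m + 3 := by
  simp [shiftedWeight, add_assoc]

lemma prod_sub_shiftedWeight (hj : j + 2 < n) (x : ℚ) :
    ∏ i ∈ range (j + 2), (x - shiftedWeight n i) =
      (x + 1) * x * (descPochhammer ℚ j).eval (x - 2) := by
  have middle : ∏ i ∈ range j, (x - shiftedWeight n (i + 2)) =
      (descPochhammer ℚ j).eval (x - 2) := by
    rw [descPochhammer_eval_eq_prod_range]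
    refine prod_congr rfl fun i hi => ?_
    rw [shiftedWeight_add_two (by have := mem_range.mp hi; lia)]
    push_cast
    ring
  rw [prod_range_succ', prod_range_succ', middle, shiftedWeight_zero, shiftedWeight_one]
  push_cast
  ring

lemma prod_shiftedWeight_add_two_sub (hj : j + 3 < n) :
    ∏ i ∈ range (j + 2), ((shiftedWeight n (j + 2) : ℚ) - shiftedWeight n i) =
      (j + 3) / (j + 1) * (j + 2)! := by
  rw [prod_sub_shiftedWeight (by lia), shiftedWeight_add_two hj,
    show (((j + 2 : ℤ) : ℚ) - 2) = j by push_cast; ring, descPochhammer_eval_eq_descFactorial,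
    Nat.descFactorial_self]
  push_cast [Nat.factorial_succ]
  field_simp
  ring

lemma prod_shiftedWeight_last_sub :
    ∏ i ∈ range (m + 2), ((shiftedWeight (m + 3) (m + 2) : ℚ) - shiftedWeight (m + 3) i) =
      (m + 3) * (m + 4) / (m + 2) * (m + 2)! := by
  have factorial_eq : (m + 1).descFactorial m = (m + 1)! := by
    simpa using Nat.factorial_mul_descFactorial (Nat.le_succ m)
  rw [prod_sub_shiftedWeight (by lia), shiftedWeight_last,
    show (((m + 3 : ℤ) : ℚ) - 2) = (m + 1 : ℕ) by push_cast; ring,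
    descPochhammer_eval_eq_descFactorial, factorial_eq]
  push_cast [Nat.factorial_succ]
  field_simp
  ring

/-- By Weyl's formula the factor `n (n + 1) (n - 2) / 2` is the dimension of the irreducible
representation of `GL n` with highest weight `(1, 0, …, 0, -1, -1)`. -/
lemma det_vandermonde_shiftedWeight (hn : 3 ≤ n) :
    (vandermonde fun i : Fin n => (shiftedWeight n i : ℚ)).det =
      n * (n + 1) * (n - 2) / 2 * ∏ k ∈ range n, (k ! : ℚ) := by
  obtain ⟨m, rfl⟩ := Nat.exists_eq_add_of_le' hn
  have middle : ∏ j ∈ range m, ∏ i ∈ range (j + 2),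
        ((shiftedWeight (m + 3) (j + 2) : ℚ) - shiftedWeight (m + 3) i) =
      (m + 1) * (m + 2) / 2 * ∏ j ∈ range m, ((j + 2)! : ℚ) := by
    rw [← prod_range_add_three_div_add_one, ← prod_mul_distrib]
    exact prod_congr rfl fun j hj =>
      prod_shiftedWeight_add_two_sub (by have := mem_range.mp hj; lia)
  rw [det_vandermonde_eq_prod_range (m + 3) fun i => (shiftedWeight (m + 3) i : ℚ),
    prod_range_add_three, prod_range_add_three, middle, prod_shiftedWeight_last_sub]
  simp only [prod_range_zero, prod_range_one, shiftedWeight_zero, shiftedWeight_one,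
    Nat.factorial_zero, Nat.factorial_one]
  push_cast
  field_simp
  ring

lemma prod_rfact_add_shiftedWeight (a : ℤ) (hn : 3 ≤ n) :
    (a + n) * ∏ i ∈ range n, rfact (a + shiftedWeight n i) =
      a * (a + 1) * ∏ k ∈ range n, rfact (a + k) := by
  obtain ⟨m, rfl⟩ := Nat.exists_eq_add_of_le' hn
  have middle : ∏ i ∈ range m, rfact (a + shiftedWeight (m + 3) (i + 2)) =
      ∏ k ∈ range m, rfact (a + (k + 2 : ℕ)) :=
    prod_congr rfl fun i hi => by
      rw [shiftedWeight_add_two (by have := mem_range.mp hi; lia)]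
      rfl
  have first_two : rfact (a + -1) * rfact (a + 0) =
      a * (a + 1) * (rfact (a + (0 : ℕ)) * rfact (a + (1 : ℕ))) := by
    have shift : rfact a = (a + 1) * rfact (a + 1) := by simpa using rfact_sub_one (a + 1)
    rw [← sub_eq_add_neg, rfact_sub_one]
    push_cast
    rw [add_zero]
    linear_combination a * rfact a * shift
  have last : rfact (a + (m + 2 : ℕ)) = (a + (m + 3)) * rfact (a + (m + 3)) := by
    rw [show a + (m + 2 : ℕ) = a + (m + 3) - 1 by push_cast; ring, rfact_sub_one]
    push_cast
    rfl
  rw [prod_range_add_three, prod_range_add_three, middle, shiftedWeight_zero, shiftedWeight_one,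
    shiftedWeight_last, first_two, last]
  push_cast
  ring

end ShiftedWeight

theorem harris_tu_determinant_sq_theta_general (s n : ℕ) (hn : 3 ≤ n) :
    Matrix.det (Matrix.of fun j ℓ : Fin n =>
        rfact ((s : ℤ) - 1 +
          (if (j : ℕ) = 0 then 2 else if (j : ℕ) < n - 2 then 1 else 0) +
          (ℓ : ℕ) - (j : ℕ))) =
      (s : ℚ) * (s + 1) * n * (n + 1) * (n - 2) / (2 * (s + n)) *
        ∏ k ∈ range n, (k ! : ℚ) / ((s + k)! : ℚ) := by
  have reversed : ∀ i k : Fin n,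
      (s : ℤ) - 1 + (if (i.rev : ℕ) = 0 then 2 else if (i.rev : ℕ) < n - 2 then 1 else 0) +
        (k.rev : ℕ) - (i.rev : ℕ) = shiftedWeight n i + s - (k : ℕ) := by
    intro i k
    simp only [Fin.val_rev, shiftedWeight]
    have := i.isLt
    have := k.isLt
    split_ifs <;> lia
  have weights : ∏ i : Fin n, rfact (shiftedWeight n i + s) =
      s * (s + 1) / (s + n) * ∏ k ∈ range n, ((s + k)! : ℚ)⁻¹ := by
    rw [Fin.prod_univ_eq_prod_range fun i => rfact (shiftedWeight n i + s), div_mul_eq_mul_div,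
      eq_div_iff (by positivity), mul_comm]
    simpa [add_comm, ← rfact_natCast] using prod_rfact_add_shiftedWeight s hn
  rw [← det_submatrix_equiv_self Fin.revPerm]
  simp only [submatrix, of_apply, Fin.revPerm_apply, reversed]
  rw [det_rfact_sub fun i : Fin n => shiftedWeight n i + s]
  push_cast
  rw [weights, det_vandermonde_add, det_vandermonde_shiftedWeight hn]
  simp only [div_eq_mul_inv, mul_inv, prod_mul_distrib]
  ring

/-- For `i₁ = 2`, `i_j = 1` for `2 ≤ j ≤ 2s−1` and `i_{2s} = i_{2s+1} = 0`, the
determinant of the `(2s+1)×(2s+1)` matrix with `(j,ℓ)`-entry `r(s − 1 + i_j − j + ℓ)`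
equals `(s(2s+1)(s+1)²(2s−1)/(3s+1))·∏_{k=0}^{2s} k!/(s+k)!`. -/
theorem harris_tu_determinant_sq_theta (s : ℕ) (hs : 2 ≤ s) :
    Matrix.det (Matrix.of fun j ℓ : Fin (2*s + 1) =>
        rfact ((s : ℤ) - 1 +
          (if (j : ℕ) = 0 then 2 else if (j : ℕ) < 2*s - 1 then 1 else 0) +
          (ℓ : ℕ) - (j : ℕ))) =
      (s : ℚ) * (2*(s : ℚ) + 1) * ((s : ℚ) + 1)^2 * (2*(s : ℚ) - 1) / (3*(s : ℚ) + 1) *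
        ∏ k ∈ Finset.range (2*s + 1),
          (Nat.factorial k : ℚ) / (Nat.factorial (s + k) : ℚ) := by
  refine (harris_tu_determinant_sq_theta_general s (2 * s + 1) (by lia)).trans ?_
  push_cast
  field_simp
  ring
end

section
/- Fix an integer s ≥ 2. Define r : ℤ → ℚ by r(n) = 1/n! for n ≥ 0 and r(n) = 0 for n < 0. Let (i₁,…,i_{2s+1}) be given by i₁ = i₂ = 2, i_j = 1 for 3 ≤ j ≤ 2s−2, and i_{2s−1} = i_{2s} = i_{2s+1} = 0. Then the determinant of the (2s+1)×(2s+1) matrix with (j,ℓ)-entry r(s − 1 + i_j − j + ℓ) equals (s(2s+1)²(2s−3)(s+1)²(s+2)/(9(3s+1)))·∏_{k=0}^{2s} k!/(s+k)!. -/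
open Finset
open scoped Nat

section VandermondeProd

variable {ι R : Type*} [LinearOrder ι] [CommRing R] (v : ι → R)

/-- The Vandermonde product `∏_{y < x} (v x - v y)` of a family `v` over the pairs of a finite
index set `S`. Indexing by a set makes it easy to delete nodes. -/
def vandermondeProd (S : Finset ι) : R := ∏ x ∈ S, ∏ y ∈ S with y < x, (v x - v y)

/-- The part of a Vandermonde product contributed by a node `p`: the product of the differences
between `v p` and `v y` for `y ∈ S`, `y ≠ p`, each taken as larger index minus smaller index. -/
def nodeProd (p : ι) (S : Finset ι) : R :=
  (∏ y ∈ S with y < p, (v p - v y)) * ∏ y ∈ S with p < y, (v y - v p)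

lemma det_vandermonde_comp_of_strictMono {n : ℕ} {g : Fin n → ι} (hg : StrictMono g) :
    (Matrix.vandermonde (v ∘ g)).det = vandermondeProd v (univ.image g) := by
  rw [Matrix.det_vandermonde, vandermondeProd, prod_image hg.injective.injOn,
    prod_comm' (t' := univ) (s' := fun j => Iio j) (by simp)]
  refine prod_congr rfl fun j _ => ?_
  rw [filter_image, prod_image hg.injective.injOn]
  simp only [hg.lt_iff_lt, filter_gt_eq_Iio, Function.comp_apply]

variable {v}

lemma vandermondeProd_insert {p : ι} {S : Finset ι} (hp : p ∉ S) :
    vandermondeProd v (insert p S) = vandermondeProd v S * nodeProd v p S := by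
  have below_old (x : ι) : ∏ y ∈ insert p S with y < x, (v x - v y) =
      (if p < x then v x - v p else 1) * ∏ y ∈ S with y < x, (v x - v y) := by
    rw [prod_filter, prod_insert hp, prod_filter]
  simp only [vandermondeProd, nodeProd, prod_insert hp, below_old, prod_mul_distrib,
    prod_filter, lt_irrefl, if_false]
  ring

lemma nodeProd_insert_of_lt {p q : ι} {S : Finset ι} (hpq : p < q) (hq : q ∉ S) :
    nodeProd v p (insert q S) = nodeProd v p S * (v q - v p) := by
  rw [nodeProd, nodeProd, filter_insert, if_neg hpq.not_gt, filter_insert, if_pos hpq,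
    prod_insert (by simp [hq])]
  ring

lemma nodeProd_insert_self (p : ι) (S : Finset ι) :
    nodeProd v p (insert p S) = nodeProd v p S := by
  simp only [nodeProd, filter_insert, lt_irrefl, if_false]

end VandermondeProd

section NatNodes

variable (R : Type*) [CommRing R]

lemma prod_range_cast_sub_eq_factorial (n : ℕ) : ∏ k ∈ range n, ((n : R) - k) = n ! := by
  rw [← Nat.descFactorial_self, Nat.descFactorial_eq_prod_range, Nat.cast_prod]
  exact prod_congr rfl fun k hk => (Nat.cast_sub (mem_range.1 hk).le).symm

lemma prod_range_filter_lt_sub {N p : ℕ} (hp : p ≤ N) :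
    ∏ y ∈ range N with y < p, ((p : R) - y) = p ! := by
  have initial_segment : {y ∈ range N | y < p} = range p := by grind
  rw [initial_segment, prod_range_cast_sub_eq_factorial]

lemma vandermondeProd_range (N : ℕ) :
    vandermondeProd (Nat.cast : ℕ → R) (range N) = ∏ k ∈ range N, (k ! : R) :=
  prod_congr rfl fun _ hx => prod_range_filter_lt_sub R (mem_range.1 hx).le

lemma nodeProd_range {n p : ℕ} (hp : p ≤ n) :
    nodeProd (Nat.cast : ℕ → R) p (range (n + 1)) = p ! * (n - p)! := by
  have final_segment : {y ∈ range (n + 1) | p < y} = Ico (p + 1) (n + 1) := by grind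
  rw [nodeProd, prod_range_filter_lt_sub R (by omega), final_segment, prod_Ico_eq_prod_range,
    Nat.add_sub_add_right, ← prod_range_add_one_eq_factorial (n - p), Nat.cast_prod]
  congr 1
  refine prod_congr rfl fun k _ => ?_
  push_cast
  ring

lemma vandermondeProd_range_sdiff_pair (K : Type*) [Field K] [CharZero K] {n p q : ℕ}
    (hpq : p < q) (hq : q ≤ n + 1) :
    vandermondeProd (Nat.cast : ℕ → K) (range (n + 2) \ {p, q}) =
      ((q : K) - p) / (p ! * (n + 1 - p)! * (q ! * (n + 1 - q)!)) *
        ∏ k ∈ range (n + 2), (k ! : K) := by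
  set S := range (n + 2) \ {p, q} with hS
  have hpS : p ∉ S := by simp [hS]
  have hqS : q ∉ insert p S := by simp [hS, hpq.ne']
  have fill : insert q (insert p S) = range (n + 2) := by grind
  have node_q : nodeProd (Nat.cast : ℕ → K) q (insert p S) = q ! * (n + 1 - q)! := by
    rw [← nodeProd_insert_self, fill, nodeProd_range K hq]
  have node_p : nodeProd (Nat.cast : ℕ → K) p S * (q - p) = p ! * (n + 1 - p)! := by
    rw [← nodeProd_range K (by omega), ← fill, nodeProd_insert_of_lt hpq hqS, nodeProd_insert_self]
  have factorial_ne_zero (k : ℕ) : (k ! : K) ≠ 0 := Nat.cast_ne_zero.2 k.factorial_ne_zero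
  have node_p_mul_ne_zero : nodeProd (Nat.cast : ℕ → K) p S * (q - p) ≠ 0 :=
    node_p.trans_ne (mul_ne_zero (factorial_ne_zero _) (factorial_ne_zero _))
  have node_p_ne_zero := left_ne_zero_of_mul node_p_mul_ne_zero
  have gap_ne_zero := right_ne_zero_of_mul node_p_mul_ne_zero
  rw [← vandermondeProd_range, ← fill, vandermondeProd_insert hqS, vandermondeProd_insert hpS,
    node_q, ← node_p]
  field_simp [factorial_ne_zero]

end NatNodes

lemma rfact_natCast_sub (L c : ℕ) : rfact ((L : ℤ) - c) = (L ! : ℚ)⁻¹ * L.descFactorial c := by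
  rcases le_or_gt c L with hc | hc
  · rw [← Nat.cast_sub hc, rfact, if_pos (Int.natCast_nonneg _), Int.toNat_natCast,
      ← Nat.factorial_mul_descFactorial hc]
    have : (L.descFactorial c : ℚ) ≠ 0 := by
      exact_mod_cast mt Nat.descFactorial_eq_zero_iff_lt.1 hc.not_gt
    push_cast
    field_simp
  · rw [rfact, if_neg (by omega), Nat.descFactorial_of_lt hc, Nat.cast_zero, mul_zero]

lemma det_rfact_sub_s14 {n : ℕ} (L : Fin n → ℕ) :
    (Matrix.of fun j c : Fin n => rfact ((L j : ℤ) - (c : ℕ))).det =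
      (∏ j, (L j)! : ℚ)⁻¹ * (Matrix.vandermonde fun j => (L j : ℚ)).det := by
  rw [Matrix.det_eval_matrixOfPolynomials_eq_det_vandermonde (fun j => (L j : ℚ))
      (fun c => descPochhammer ℚ c) (fun c => descPochhammer_natDegree ℚ c)
      (fun c => monic_descPochhammer ℚ c), ← prod_inv_distrib, ← Matrix.det_mul_column]
  simp only [rfact_natCast_sub, Matrix.of_apply, descPochhammer_eval_eq_descFactorial]

lemma det_rfact_of_two_gaps {n p q : ℕ} (a : ℕ) (hpq : p < q) (hq : q ≤ n + 1) {g : Fin n → ℕ}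
    (hg : StrictMono g) (hgaps : ∀ j, g j ∈ range (n + 2) \ {p, q}) :
    (Matrix.of fun j c : Fin n => rfact (((a + g j : ℕ) : ℤ) - (c : ℕ))).det =
      ((q : ℚ) - p) * ((a + p)! * (a + q)!) / (p ! * (n + 1 - p)! * (q ! * (n + 1 - q)!)) *
        ∏ k ∈ range (n + 2), (k ! : ℚ) / (a + k)! := by
  have hpq_mem : {p, q} ⊆ range (n + 2) := by grind
  have image_g : univ.image g = range (n + 2) \ {p, q} := by
    refine eq_of_subset_of_card_le (by simpa [subset_iff] using hgaps) ?_
    rw [card_sdiff_of_subset hpq_mem, card_pair hpq.ne, card_range,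
      card_image_of_injective _ hg.injective, card_fin, Nat.add_sub_cancel]
  have vandermonde_g : (Matrix.vandermonde fun j => ((a + g j : ℕ) : ℚ)).det =
      vandermondeProd (Nat.cast : ℕ → ℚ) (range (n + 2) \ {p, q}) := by
    rw [← image_g, ← det_vandermonde_comp_of_strictMono _ hg,
      ← Matrix.det_vandermonde_add (Nat.cast ∘ g) (a : ℚ)]
    simp only [Nat.cast_add, add_comm (a : ℚ), Function.comp_apply]
  have factorials_g : (∏ j, (a + g j)! : ℚ) * ((a + p)! * (a + q)!) =
      ∏ k ∈ range (n + 2), ((a + k)! : ℚ) := by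
    rw [← prod_sdiff hpq_mem, prod_pair hpq.ne, ← image_g, prod_image hg.injective.injOn]
  rw [det_rfact_sub_s14, vandermonde_g, vandermondeProd_range_sdiff_pair ℚ hpq hq, prod_div_distrib,
    ← factorials_g]
  have : (∏ j, (a + g j)! : ℚ) ≠ 0 := by positivity
  field_simp

lemma prod_factorial_div_factorial_add_two {K : Type*} [Field K] (a n : ℕ) :
    ∏ k ∈ range (n + 2), (k ! : K) / (a + k)! =
      n ! * (n + 1)! / (a ! * (a + 1 + n)!) * ∏ k ∈ range n, (k ! : K) / (a + 1 + k)! := by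
  have shift : ∏ k ∈ range (n + 2), ((a + k)! : K) =
      a ! * (∏ k ∈ range n, ((a + 1 + k)! : K)) * (a + 1 + n)! := by
    rw [prod_range_succ', prod_range_succ]
    simp only [add_assoc, add_comm 1, add_zero]
    ring
  rw [prod_div_distrib, prod_div_distrib, shift, prod_range_succ, prod_range_succ]
  ring

/-- The increasing enumeration of `{0, …, 2m + 4} \ {3, 2m + 2}` by `j < 2m + 3`, for `m ≥ 1`. With
`s = m + 1`, the largest argument of `r` in the `j`-th row from the bottom is `m + gapSeq m j`. -/
def gapSeq (m j : ℕ) : ℕ := if j < 3 then j else if j < 2 * m + 1 then j + 1 else j + 2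

lemma gapSeq_strictMono (m : ℕ) : StrictMono (gapSeq m) := by
  intro i j hij
  grind [gapSeq]

lemma gapSeq_mem {m j : ℕ} (hm : 1 ≤ m) (hj : j < 2 * m + 3) :
    gapSeq m j ∈ range (2 * m + 3 + 2) \ {3, 2 * m + 2} := by
  grind [gapSeq]

lemma det_rfact_gapSeq {m : ℕ} (hm : 1 ≤ m) :
    (Matrix.of fun j c : Fin (2 * m + 3) => rfact (((m + gapSeq m j : ℕ) : ℤ) - (c : ℕ))).det =
      (2 * m - 1) * ((m + 3)! * (3 * m + 2)!) / (3 ! * (2 * m + 1)! * ((2 * m + 2)! * 2 !)) *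
        ∏ k ∈ range (2 * m + 5), (k ! : ℚ) / (m + k)! := by
  rw [det_rfact_of_two_gaps m (by omega : 3 < 2 * m + 2) (by omega)
    (fun _ _ hij => gapSeq_strictMono m hij) (fun j => gapSeq_mem hm j.2),
    show 2 * m + 3 + 1 - 3 = 2 * m + 1 by omega, show 2 * m + 3 + 1 - (2 * m + 2) = 2 by omega,
    show m + (2 * m + 2) = 3 * m + 2 by ring]
  push_cast
  ring

lemma two_gap_prefactor (m : ℕ) :
    (2 * m - 1) * ((m + 3)! * (3 * m + 2)!) / (3 ! * (2 * m + 1)! * ((2 * m + 2)! * 2 !)) *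
        ((2 * m + 3)! * (2 * m + 3 + 1)! / (m ! * (m + 1 + (2 * m + 3))!)) =
      ((m : ℚ) + 1) * (2 * (m + 1) + 1) ^ 2 * (2 * (m + 1) - 3) * (m + 1 + 1) ^ 2 * (m + 1 + 2) /
        (9 * (3 * (m + 1) + 1)) := by
  rw [show m + 1 + (2 * m + 3) = 3 * m + 2 + 1 + 1 by ring]
  simp only [Nat.factorial_succ, Nat.factorial_zero]
  push_cast
  field_simp
  ring

/-- For `i₁ = i₂ = 2`, `i_j = 1` for `3 ≤ j ≤ 2s−2` and `i_{2s−1} = i_{2s} = i_{2s+1} = 0`,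
the determinant of the `(2s+1)×(2s+1)` matrix with `(j,ℓ)`-entry `r(s − 1 + i_j − j + ℓ)`
equals `(s(2s+1)²(2s−3)(s+1)²(s+2)/(9(3s+1)))·∏_{k=0}^{2s} k!/(s+k)!`. -/
theorem harris_tu_determinant_sq_sq_theta (s : ℕ) (hs : 2 ≤ s) :
    Matrix.det (Matrix.of fun j ℓ : Fin (2*s + 1) =>
        rfact ((s : ℤ) - 1 +
          (if (j : ℕ) < 2 then 2 else if (j : ℕ) < 2*s - 2 then 1 else 0) +
          (ℓ : ℕ) - (j : ℕ))) =
      (s : ℚ) * (2*(s : ℚ) + 1)^2 * (2*(s : ℚ) - 3) * ((s : ℚ) + 1)^2 * ((s : ℚ) + 2) /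
          (9 * (3*(s : ℚ) + 1)) *
        ∏ k ∈ Finset.range (2*s + 1),
          (Nat.factorial k : ℚ) / (Nat.factorial (s + k) : ℚ) := by
  obtain ⟨m, rfl⟩ := Nat.exists_eq_add_of_le' (one_le_two.trans hs)
  have reversed_entries : (Matrix.of fun j ℓ : Fin (2 * (m + 1) + 1) =>
      rfact (((m + 1 : ℕ) : ℤ) - 1 +
        (if (j : ℕ) < 2 then 2 else if (j : ℕ) < 2 * (m + 1) - 2 then 1 else 0) +
        (ℓ : ℕ) - (j : ℕ))).submatrix Fin.revPerm Fin.revPerm =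
      Matrix.of fun j c : Fin (2 * m + 3) => rfact (((m + gapSeq m j : ℕ) : ℤ) - (c : ℕ)) := by
    ext j c
    simp only [Matrix.submatrix_apply, Matrix.of_apply, Fin.revPerm_apply, Fin.val_rev, gapSeq]
    congr 1
    grind
  rw [← Matrix.det_submatrix_equiv_self Fin.revPerm, reversed_entries,
    det_rfact_gapSeq (Nat.le_of_succ_le_succ hs),
    prod_factorial_div_factorial_add_two, ← mul_assoc, two_gap_prefactor]
  push_cast
  rfl
end
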